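/- Let k be an algebraically closed field, S a polynomial ring over k, and p ⊆ S a graded prime ideal with height(p) = 3 and Hilbert–Samuel multiplicity e(S/p) = 5. If p contains a homogeneous ideal of height 3 generated by quadrics, then p is nondegenerate, i.e., p contains no nonzero linear form. -/

import Mathlib

open CategoryTheory Opposite

universe u

/-- The height of an ideal: the infimum of the heights (in the prime spectrum,
ordered by inclusion) of the primes containing it. -/
noncomputable def Ideal.heightENat {R : Type u} [CommRing R] (I : Ideal R) : ℕ∞ :=
  ⨅ (p : PrimeSpectrum R) (_ : I ≤ p.asIdeal), Order.height p

/-- The projective dimension of an `R`-module `M`: the least `n` such that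
`Ext^i(M, N) = 0` for all `i > n` and all modules `N` (and `⊤` if no such `n` exists). -/
noncomputable def projDim (R : Type u) [CommRing R] (M : Type u) [AddCommGroup M]
    [Module R M] : ℕ∞ :=
  sInf ((↑) '' {n : ℕ | ∀ i : ℕ, n < i → ∀ N : ModuleCat.{u} R,
    Subsingleton (((Ext R (ModuleCat.{u} R) i).obj (op (ModuleCat.of R M))).obj N)})

/-- The Hilbert function of the standard graded ring `S/J`, where
`S = k[x_1, ..., x_N]`: the `k`-dimension of the degree-`d` graded piece of `S/J`. -/
noncomputable def hilbertFunction (k : Type u) [Field k] {N : ℕ}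
    (J : Ideal (MvPolynomial (Fin N) k)) (d : ℕ) : ℕ :=
  Module.finrank k (Submodule.map (Ideal.Quotient.mkₐ k J).toLinearMap
    (MvPolynomial.homogeneousSubmodule (Fin N) k d))

open scoped Classical in
/-- The Hilbert–Samuel multiplicity `e(S/J)` of the graded ring `S/J`:
`(deg P)!` times the leading coefficient of the Hilbert polynomial `P` of `S/J`,
i.e. of the polynomial agreeing with the Hilbert function in all large degrees
(the degree of the Hilbert polynomial being `dim(S/J) - 1`). -/
noncomputable def hilbertSamuelMultiplicity (k : Type u) [Field k] {N : ℕ}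
    (J : Ideal (MvPolynomial (Fin N) k)) : ℚ :=
  if h : ∃ P : Polynomial ℚ, ∀ᶠ d : ℕ in Filter.atTop,
      (hilbertFunction k J d : ℚ) = P.eval (d : ℚ)
  then (h.choose.natDegree).factorial * h.choose.leadingCoeff
  else 0

attribute [local instance] MvPolynomial.gradedAlgebra

/-!
Suppose `p` contains a linear form `l ≠ 0`. Eliminating a variable with the help of `l` changes
neither `S/p` nor its Hilbert function, but leaves one variable less, and `p` becomes a prime
ideal `J`. The images of the quadrics do not all lie in one principal prime `(π)`: the preimage of
`(π)` is generated by two elements, so by Krull its height is at most `2`. As a quadric has at most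
two prime factors, and a vector space is not a union of two proper subspaces, some two elements
`f, g ∈ J` of the span of these images are coprime. By the Koszul relation, the Hilbert function of
`J` is at most that of the complete intersection `(f, g)`, whose multiplicity is `2 * 2`. On the
other hand, `S/p` contains a polynomial ring in `N - 3` of the variables, so its Hilbert polynomial
has degree at least `N - 4`. Hence `e(S/p) ≤ 4`.

The same argument gives `e(S/p) ≤ d ^ 2` for forms of degree `d` over a field with at least `d`
elements.
-/

open MvPolynomial Filter

section Height

lemma heightENat_eq_height {R : Type*} [CommRing R] (I : Ideal R) : I.heightENat = I.height := by
  apply le_antisymm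
  · rw [Ideal.height_eq_inf_minimalPrimes]
    exact le_iInf₂ fun q hq ↦ (iInf₂_le (⟨q, hq.1.1⟩ : PrimeSpectrum R) hq.1.2).trans_eq
      (PrimeSpectrum.height_eq_orderHeight _).symm
  · refine le_iInf₂ fun q hq ↦ ?_
    rw [← PrimeSpectrum.height_eq_orderHeight]
    exact Ideal.height_mono hq

lemma height_comap_span_singleton_le_two {A B : Type*} [CommRing A] [IsNoetherianRing A]
    [CommRing B] {φ : A →+* B} (hφ : Function.Surjective φ) {l : A}
    (hker : RingHom.ker φ = Ideal.span {l}) {b : B} (hb : Ideal.span {b} ≠ ⊤) :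
    ((Ideal.span {b}).comap φ).height ≤ 2 := by
  obtain ⟨a, rfl⟩ := hφ b
  have hcomap : (Ideal.span {φ a}).comap φ = Ideal.span {a, l} := by
    rw [← Set.image_singleton, ← Ideal.map_span, Ideal.comap_map_of_surjective φ hφ,
      ← RingHom.ker_eq_comap_bot, hker, ← Ideal.span_union, Set.singleton_union]
  calc ((Ideal.span {φ a}).comap φ).height
      ≤ ((Ideal.span {φ a}).comap φ).spanFinrank :=
        Ideal.height_le_spanFinrank _ (Ideal.comap_ne_top φ hb)
    _ ≤ (({a, l} : Set A).ncard : ℕ∞) := by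
        rw [hcomap]
        exact_mod_cast Submodule.spanFinrank_span_le_ncard_of_finite (Set.toFinite _)
    _ ≤ 2 := by 
        exact_mod_cast (Set.ncard_insert_le a {l}).trans_eq (by rw [Set.ncard_singleton])

end Height

section IndependentVariables

section Polynomial

variable {A : Type*} [CommRing A] [IsNoetherianRing A] (P : Ideal (Polynomial A)) [P.IsPrime]

lemma height_comap_C_le : (P.comap Polynomial.C).height ≤ P.height := by
  have : P.LiesOver (P.comap Polynomial.C) := ⟨rfl⟩
  exact le_self_add.trans_eq
    (Ideal.height_eq_height_add_of_liesOver_of_hasGoingDown (P.comap Polynomial.C) P).symm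

variable {P} in
lemma height_comap_C_add_one_le (hP : ¬ P ≤ (P.comap Polynomial.C).map Polynomial.C) :
    (P.comap Polynomial.C).height + 1 ≤ P.height := by
  have : P.LiesOver (P.comap Polynomial.C) := ⟨rfl⟩
  have : ((P.comap Polynomial.C).map Polynomial.C).IsPrime := Ideal.isPrime_map_C_of_isPrime
  rw [Ideal.height_eq_height_add_of_liesOver_of_hasGoingDown (P.comap Polynomial.C) P]
  gcongr
  rwa [Order.one_le_iff_ne_zero, Ne, Ideal.height_eq_zero_iff_eq_bot,
    Ideal.map_eq_bot_iff_le_ker, Ideal.mk_ker]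

end Polynomial

lemma eq_zero_of_map_mem_map_C {R A : Type*} [CommRing R] [CommRing A] {f : R →+* A} {I : Ideal A}
    (hf : ∀ r, f r ∈ I → r = 0) {q : Polynomial R} (hq : q.map f ∈ I.map Polynomial.C) :
    q = 0 := by
  rw [Ideal.mem_map_C_iff] at hq
  ext n
  exact hf _ (by simpa using hq n)

section Rename

variable {R σ τ : Type*} [CommSemiring R] (j : τ → σ)

lemma optionEquivLeft_rename_some (f : MvPolynomial τ R) :
    optionEquivLeft R σ (rename (some ∘ j) f) = Polynomial.C (rename j f) := by
  induction f using MvPolynomial.induction_on with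
  | C a => simp
  | add f g hf hg => simp only [map_add, hf, hg]
  | mul_X f i hf => simp [hf]

lemma optionEquivLeft_rename_optionMap (f : MvPolynomial (Option τ) R) :
    optionEquivLeft R σ (rename (Option.map j) f) =
      (optionEquivLeft R τ f).map (rename j : MvPolynomial τ R →ₐ[R] MvPolynomial σ R) := by
  induction f using MvPolynomial.induction_on with
  | C a => simp
  | add f g hf hg => simp only [map_add, Polynomial.map_add, hf, hg]
  | mul_X f i hf => cases i <;> simp [hf]

end Rename

lemma eq_zero_of_mem_of_isEmpty {k σ : Type*} [Field k] [IsEmpty σ] {I : Ideal (MvPolynomial σ k)}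
    (hI : I ≠ ⊤) {f : MvPolynomial σ k} (hf : f ∈ I) : f = 0 := by
  obtain ⟨c, rfl⟩ := C_surjective σ f
  by_contra hc
  exact hI (Ideal.eq_top_of_isUnit_mem _ hf ((IsUnit.mk0 c fun h0 ↦ hc (by rw [h0, C_0])).map C))

lemma exists_rename_mem_imp_eq_zero {k σ : Type*} [Field k] [Finite σ]
    (P : Ideal (MvPolynomial σ k)) [hP : P.IsPrime] :
    ∃ (τ : Type) (_ : Finite τ) (j : τ → σ),
      (∀ f : MvPolynomial τ k, rename j f ∈ P → f = 0) ∧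
      (Nat.card σ : ℕ∞) ≤ Nat.card τ + P.height := by
  induction σ using Finite.induction_empty_option with
  | @of_equiv α β e ih =>
    obtain ⟨τ, hτ, j, hj, hcard⟩ := ih (P.comap (renameEquiv k e).toRingEquiv)
    refine ⟨τ, hτ, e ∘ j, fun f hf ↦ hj f ?_, ?_⟩
    · simpa [Ideal.mem_comap, rename_rename] using hf
    · rwa [RingEquiv.height_comap, Nat.card_congr e] at hcard
  | h_empty =>
    exact ⟨Empty, inferInstance, Empty.elim, fun f hf ↦ rename_injective _ (fun i ↦ i.elim) <| by
      rw [eq_zero_of_mem_of_isEmpty hP.ne_top hf, map_zero], by simp⟩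
  | @h_option α _ ih =>
    let E := (optionEquivLeft k α).toRingEquiv
    let P' : Ideal (Polynomial (MvPolynomial α k)) := P.comap E.symm
    have hmem (f) : f ∈ P ↔ optionEquivLeft k α f ∈ P' := by
      simp [P', E, -Ideal.comap_symm]
    have hheight : P'.height = P.height := RingEquiv.height_comap _ _
    have hcardα : (Nat.card (Option α) : ℕ∞) = Nat.card α + 1 := by simp
    obtain ⟨τ, hτ, j, hj, hcard⟩ := ih (P'.comap Polynomial.C)
    rw [← hheight, hcardα]
    by_cases hle : P' ≤ (P'.comap Polynomial.C).map Polynomial.C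
    · refine ⟨Option τ, inferInstance, Option.map j, fun f hf ↦ ?_, ?_⟩
      · rw [hmem, optionEquivLeft_rename_optionMap] at hf
        simpa using eq_zero_of_map_mem_map_C hj (hle hf)
      · calc (Nat.card α : ℕ∞) + 1 ≤ Nat.card τ + P'.height + 1 := by
              gcongr
              exact hcard.trans (by gcongr; exact height_comap_C_le P')
          _ = Nat.card (Option τ) + P'.height := by
              rw [Finite.card_option, Nat.cast_add_one, add_right_comm]
    · refine ⟨τ, hτ, some ∘ j, fun f hf ↦ hj f ?_, ?_⟩
      · rwa [hmem, optionEquivLeft_rename_some] at hf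
      · calc (Nat.card α : ℕ∞) + 1 ≤ Nat.card τ + (P'.comap Polynomial.C).height + 1 := by gcongr
          _ ≤ Nat.card τ + P'.height := by
              rw [add_assoc]
              gcongr
              exact height_comap_C_add_one_le hle

end IndependentVariables

section PolynomialGrowth

open Polynomial

variable {𝕜 : Type*} [NormedField 𝕜] [LinearOrder 𝕜] [IsStrictOrderedRing 𝕜] [OrderTopology 𝕜]
  [Archimedean 𝕜] {P Q : 𝕜[X]}

lemma leadingCoeff_nonneg_of_eventually_eval_nonneg
    (hP : ∀ᶠ n : ℕ in atTop, 0 ≤ P.eval (n : 𝕜)) : 0 ≤ P.leadingCoeff := by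
  rcases le_or_gt P.degree 0 with hdeg | hdeg
  · obtain ⟨n, hn⟩ := hP.exists
    rw [eq_C_of_degree_le_zero hdeg] at hn ⊢
    simpa using hn
  · by_contra! hlc
    have hbot := (P.tendsto_atBot_of_leadingCoeff_nonpos hdeg hlc.le).comp
      (tendsto_natCast_atTop_atTop (R := 𝕜))
    obtain ⟨n, hn, hn'⟩ := (hP.and (hbot.eventually_lt_atBot 0)).exists
    exact hn.not_gt hn'

lemma natDegree_le_of_eventually_eval_le (hP : ∀ᶠ n : ℕ in atTop, 0 ≤ P.eval (n : 𝕜))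
    (hPQ : ∀ᶠ n : ℕ in atTop, P.eval (n : 𝕜) ≤ Q.eval (n : 𝕜)) : P.natDegree ≤ Q.natDegree := by
  by_contra! hlt
  have hsub : (Q - P).leadingCoeff = -P.leadingCoeff :=
    leadingCoeff_sub_of_degree_lt' (degree_lt_degree hlt)
  have hnonneg : 0 ≤ (Q - P).leadingCoeff :=
    leadingCoeff_nonneg_of_eventually_eval_nonneg <| by simpa using hPQ
  have hzero : P.leadingCoeff = 0 :=
    le_antisymm (by linarith) (leadingCoeff_nonneg_of_eventually_eval_nonneg hP)
  simp [leadingCoeff_eq_zero.mp hzero] at hlt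

lemma coeff_le_coeff_of_eventually_eval_le {m : ℕ} (hP : P.natDegree ≤ m) (hQ : Q.natDegree ≤ m)
    (hPQ : ∀ᶠ n : ℕ in atTop, P.eval (n : 𝕜) ≤ Q.eval (n : 𝕜)) : P.coeff m ≤ Q.coeff m := by
  have hnonneg : 0 ≤ (Q - P).leadingCoeff :=
    leadingCoeff_nonneg_of_eventually_eval_nonneg <| by simpa using hPQ
  rw [← sub_nonneg, ← Polynomial.coeff_sub]
  rcases (natDegree_sub_le_of_le hQ hP).lt_or_eq with hlt | heq
  · exact (Polynomial.coeff_eq_zero_of_natDegree_lt (by simpa using hlt)).ge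
  · rw [max_self] at heq
    rwa [leadingCoeff, heq] at hnonneg

end PolynomialGrowth

section Multichoose

lemma multichoose_le_multichoose_left {m n : ℕ} (h : m ≤ n) (d : ℕ) :
    m.multichoose d ≤ n.multichoose d := by
  rw [Nat.multichoose_eq, Nat.multichoose_eq]
  exact Nat.choose_le_choose d (by omega)

-- Monotonicity in the degree fails only from `multichoose 0 0 = 1` to `multichoose 0 1 = 0`.
lemma multichoose_le_multichoose_succ (n : ℕ) {d : ℕ} (hd : d ≠ 0) :
    n.multichoose d ≤ n.multichoose (d + 1) := by
  obtain ⟨d, rfl⟩ := Nat.exists_eq_succ_of_ne_zero hd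
  cases n with
  | zero => simp
  | succ n => exact (Nat.le_add_left _ _).trans_eq (Nat.multichoose_succ_succ n (d + 1)).symm

lemma multichoose_succ_add_le (n d a : ℕ) :
    (n + 1).multichoose (d + a) ≤ (n + 1).multichoose d + a * n.multichoose (d + a) := by
  induction a with
  | zero => simp
  | succ a ih =>
    have hmono : a * n.multichoose (d + a) ≤ a * n.multichoose (d + a + 1) := by
      rcases eq_or_ne a 0 with rfl | ha
      · simp
      · exact Nat.mul_le_mul_left a (multichoose_le_multichoose_succ n (by omega))
    rw [← add_assoc, Nat.multichoose_succ_succ, add_one_mul]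
    omega

lemma multichoose_add_two_add_add_le (n e a b : ℕ) :
    (n + 2).multichoose (e + a + b) + (n + 2).multichoose e ≤
      (n + 2).multichoose (e + a) + (n + 2).multichoose (e + b) +
        a * b * n.multichoose (e + a + b) := by
  induction a with
  | zero => simp; omega
  | succ a ih =>
    have hmono : a * b * n.multichoose (e + a + b) ≤ a * b * n.multichoose (e + a + b + 1) := by
      rcases eq_or_ne a 0 with rfl | ha
      · simp
      · exact Nat.mul_le_mul_left _ (multichoose_le_multichoose_succ n (by omega))
    have hstep := multichoose_succ_add_le n (e + a + 1) b
    rw [add_right_comm] at hstep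
    rw [← add_assoc e a 1, add_right_comm (e + a), Nat.multichoose_succ_succ (n + 1) (e + a + b),
      Nat.multichoose_succ_succ (n + 1) (e + a), add_one_mul, add_mul]
    simp only [add_assoc, Nat.reduceAdd] at ih hmono hstep ⊢
    omega

open Polynomial Nat in
lemma exists_eval_eq_multichoose (n : ℕ) :
    ∃ Q : ℚ[X], (∀ᶠ d : ℕ in atTop, Q.eval (d : ℚ) = n.multichoose d) ∧
      Q.natDegree ! * Q.leadingCoeff ≤ 1 := by
  cases n with
  | zero =>
    refine ⟨0, ?_, by simp⟩
    filter_upwards [eventually_ge_atTop 1] with d hd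
    obtain ⟨d, rfl⟩ := Nat.exists_eq_add_of_le' hd
    simp
  | succ r =>
    refine ⟨preHilbertPoly ℚ r 0, Eventually.of_forall fun d ↦ ?_, ?_⟩
    · rw [preHilbertPoly_eq_choose_sub_add ℚ r d.zero_le, Nat.multichoose_eq, Nat.sub_zero,
        show r + 1 + d - 1 = d + r by omega, Nat.choose_symm_add]
    · rw [natDegree_preHilbertPoly, leadingCoeff_preHilbertPoly,
        mul_inv_cancel₀ (by positivity)]

end Multichoose

section PrimeAvoidance

lemma exists_forall_notMem_of_card_le_card {K M ι : Type*} [Field K] [AddCommGroup M] [Module K M]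
    {s : Finset ι} {p : ι → Submodule K M} (hp : ∀ i ∈ s, p i ≠ ⊤)
    (hs : (s.card : ℕ∞) ≤ ENat.card K) : ∃ x, ∀ i ∈ s, x ∉ p i := by
  classical
  induction s using Finset.induction_on with
  | empty => simp
  | insert j s hj ih =>
    have hcard : (s.card : ℕ∞) < ENat.card K := by
      rw [Finset.card_insert_of_notMem hj] at hs
      exact lt_of_lt_of_le (by exact_mod_cast s.card.lt_succ_self) hs
    simp only [Finset.forall_mem_insert] at hp ⊢
    obtain ⟨z, hz⟩ := ih hp.2 hcard.le
    by_cases hzj : z ∉ p j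
    · exact ⟨z, hzj, hz⟩
    rw [not_not] at hzj
    obtain ⟨x, hx⟩ : ∃ x, x ∉ p j := by simpa [Submodule.eq_top_iff'] using hp.1
    -- Each `p i` with `i ∈ s` meets the line `x + K z` at most once, and `p j` misses it.
    obtain ⟨t, ht⟩ : ∃ t : K, ∀ i ∈ s, x + t • z ∉ p i := by
      by_contra! hcover
      choose i his hi using hcover
      have hinj : Function.Injective fun t ↦ (⟨i t, his t⟩ : s) := by
        intro t u htu
        by_contra hne
        have hmem : (t - u) • z ∈ p (i t) := by
          have hiu : x + u • z ∈ p (i t) := by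
            rw [show i t = i u from congrArg Subtype.val htu]
            exact hi u
          simpa [sub_smul] using sub_mem (hi t) hiu
        exact hz _ (his t) ((Submodule.smul_mem_iff _ (sub_ne_zero.mpr hne)).mp hmem)
      exact hcard.not_ge (by simpa using ENat.card_le_card_of_injective hinj)
    exact ⟨x + t • z, fun h ↦ hx (by simpa using sub_mem h ((p j).smul_mem t hzj)), ht⟩

open UniqueFactorizationMonoid in
lemma exists_isRelPrime_of_card_factors_le {K B : Type*} [Field K] [CommRing B] [IsDomain B]
    [UniqueFactorizationMonoid B] [Algebra K B] (W : Submodule K B)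
    (hW : ∀ π : B, (Ideal.span {π}).IsPrime → ¬ (W : Set B) ⊆ Ideal.span {π})
    (hcard : ∀ f ∈ W, f ≠ 0 → ((factors f).card : ℕ∞) ≤ ENat.card K) :
    ∃ f ∈ W, ∃ g ∈ W, f ≠ 0 ∧ IsRelPrime f g := by
  classical
  obtain ⟨f, hfW, hf⟩ : ∃ f ∈ W, f ≠ 0 := by
    simpa [Set.subset_def] using hW 0 (by simpa using Ideal.isPrime_bot)
  obtain ⟨g, hg⟩ := exists_forall_notMem_of_card_le_card (s := (factors f).toFinset)
    (p := fun π ↦ ((Ideal.span {π}).restrictScalars K).comap W.subtype)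
    (fun π hπ htop ↦ by
      have hprime := prime_of_factor π (Multiset.mem_toFinset.mp hπ)
      refine hW π ((Ideal.span_singleton_prime hprime.ne_zero).mpr hprime) fun w hw ↦ ?_
      exact (Submodule.eq_top_iff'.mp htop) ⟨w, hw⟩)
    ((Nat.cast_le.mpr (Multiset.toFinset_card_le _)).trans (hcard f hfW hf))
  refine ⟨f, hfW, g, g.2, hf, (isRelPrime_iff_no_prime_factors hf).mpr fun π hπf hπg hπ ↦ ?_⟩
  obtain ⟨ρ, hρ, hassoc⟩ := exists_mem_factors_of_dvd hf hπ.irreducible hπf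
  exact hg ρ (Multiset.mem_toFinset.mpr hρ)
    (Ideal.mem_span_singleton.mpr (hassoc.symm.dvd.trans hπg))

lemma card_factors_le_totalDegree {k σ : Type*} [Field k] {f : MvPolynomial σ k} (hf : f ≠ 0) :
    (UniqueFactorizationMonoid.factors f).card ≤ f.totalDegree := by
  have hprod : ∀ s : Multiset (MvPolynomial σ k), (∀ g ∈ s, Irreducible g) →
      s.card ≤ s.prod.totalDegree := by
    intro s
    induction s using Multiset.induction_on with
    | empty => simp
    | cons g s ih =>
      intro hs
      simp only [Multiset.forall_mem_cons] at hs
      have hg : g.totalDegree ≠ 0 := fun h ↦ hs.1.not_isUnit <| by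
        have hC := totalDegree_eq_zero_iff_eq_C.mp h
        rw [hC]
        exact (IsUnit.mk0 _ fun h0 ↦ hs.1.ne_zero (by rw [hC, h0, C_0])).map C
      rw [Multiset.card_cons, Multiset.prod_cons, totalDegree_mul_of_isDomain hs.1.ne_zero
        (Multiset.prod_ne_zero fun h0 ↦ not_irreducible_zero (hs.2 0 h0))]
      have := ih hs.2
      omega
  exact (hprod _ fun g hg ↦ UniqueFactorizationMonoid.irreducible_of_factor g hg).trans
    (totalDegree_le_of_dvd_of_isDomain (UniqueFactorizationMonoid.factors_prod hf).dvd hf)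

end PrimeAvoidance

section HilbertFunction

instance finite_homogeneousSubmodule {R σ : Type*} [CommSemiring R] [Finite σ] (d : ℕ) :
    Module.Finite R (homogeneousSubmodule σ R d) :=
  Module.Finite.iff_fg.mpr (homogeneousSubmodule_fg σ R d)

lemma finrank_homogeneousSubmodule {R σ : Type*} [CommRing R] [Nontrivial R] [Finite σ] (d : ℕ) :
    Module.finrank R (homogeneousSubmodule σ R d) = (Nat.card σ).multichoose d := by
  classical
  let e : {m : σ →₀ ℕ | m.degree = d} ≃ Sym σ d :=
    Finsupp.orderIsoMultiset.toEquiv.subtypeEquiv fun m ↦ by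
      change m.degree = d ↔ (Finsupp.toMultiset m).card = d
      rw [Finsupp.card_toMultiset]
      rfl
  have := Fintype.ofFinite σ
  have := Fintype.ofEquiv _ e.symm
  rw [homogeneousSubmodule_eq_finsupp_supported,
    (AddMonoidAlgebra.supportedEquivFinsupp (R := R) (S := R)
      {m : σ →₀ ℕ | m.degree = d}).finrank_eq,
    Module.finrank_finsupp_self, ← Nat.card_eq_fintype_card, Nat.card_congr e,
    Sym.natCard_sym_eq_multichoose]

variable {k : Type u} [Field k] {m n : ℕ}

lemma multichoose_card_le_hilbertFunction {τ : Type*} [Finite τ]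
    {J : Ideal (MvPolynomial (Fin n) k)} {j : τ → Fin n}
    (hj : ∀ f : MvPolynomial τ k, rename j f ∈ J → f = 0) (d : ℕ) :
    (Nat.card τ).multichoose d ≤ hilbertFunction k J d := by
  let ψ := (Ideal.Quotient.mkₐ k J).comp (rename j)
  have hψ : Function.Injective ψ.toLinearMap :=
    (injective_iff_map_eq_zero ψ).mpr fun f hf ↦ hj f (Ideal.Quotient.eq_zero_iff_mem.mp hf)
  calc (Nat.card τ).multichoose d = Module.finrank k (homogeneousSubmodule τ k d) :=
        (finrank_homogeneousSubmodule d).symm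
    _ = Module.finrank k ((homogeneousSubmodule τ k d).map ψ.toLinearMap) :=
        (Submodule.equivMapOfInjective _ hψ _).finrank_eq
    _ ≤ hilbertFunction k J d := by
        refine Submodule.finrank_mono ?_
        rintro _ ⟨f, hf, rfl⟩
        exact ⟨rename j f, IsHomogeneous.rename_isHomogeneous hf, rfl⟩

lemma multichoose_le_hilbertFunction {h : ℕ} {p : Ideal (MvPolynomial (Fin (n + h)) k)} [p.IsPrime]
    (hp : p.height ≤ h) (d : ℕ) : n.multichoose d ≤ hilbertFunction k p d := by
  obtain ⟨τ, _, j, hj, hcard⟩ := exists_rename_mem_imp_eq_zero p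
  have hle : n + h ≤ Nat.card τ + h := by
    rw [Nat.card_fin] at hcard
    exact_mod_cast hcard.trans (add_le_add_right hp _)
  exact (multichoose_le_multichoose_left (Nat.le_of_add_le_add_right hle) d).trans
    (multichoose_card_le_hilbertFunction hj d)

lemma hilbertFunction_comap {φ : MvPolynomial (Fin m) k →ₐ[k] MvPolynomial (Fin n) k} {d : ℕ}
    (hφ : (homogeneousSubmodule (Fin m) k d).map φ.toLinearMap = homogeneousSubmodule (Fin n) k d)
    (J : Ideal (MvPolynomial (Fin n) k)) :
    hilbertFunction k (J.comap φ) d = hilbertFunction k J d := by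
  let ψ : MvPolynomial (Fin m) k ⧸ J.comap φ →ₐ[k] MvPolynomial (Fin n) k ⧸ J :=
    Ideal.quotientMapₐ J φ le_rfl
  have hψ : Function.Injective ψ.toLinearMap := Ideal.quotientMap_injective
  rw [hilbertFunction, (Submodule.equivMapOfInjective _ hψ _).finrank_eq, hilbertFunction, ← hφ,
    ← Submodule.map_comp, ← Submodule.map_comp]
  rfl

lemma hilbertFunction_add_finrank_le {J : Ideal (MvPolynomial (Fin n) k)} {d : ℕ}
    {W : Submodule k (MvPolynomial (Fin n) k)} (hWd : W ≤ homogeneousSubmodule (Fin n) k d)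
    (hWJ : W ≤ J.restrictScalars k) :
    hilbertFunction k J d + Module.finrank k W ≤ n.multichoose d := by
  let ψ := (Ideal.Quotient.mkₐ k J).toLinearMap.domRestrict (homogeneousSubmodule (Fin n) k d)
  have hker : W.comap (homogeneousSubmodule (Fin n) k d).subtype ≤ LinearMap.ker ψ :=
    fun w hw ↦ Ideal.Quotient.eq_zero_iff_mem.mpr (hWJ hw)
  calc hilbertFunction k J d + Module.finrank k W
      = Module.finrank k (LinearMap.range ψ) +
          Module.finrank k (W.comap (homogeneousSubmodule (Fin n) k d).subtype) := by
        rw [LinearMap.range_domRestrict, (Submodule.comapSubtypeEquivOfLe hWd).finrank_eq,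
          hilbertFunction]
    _ ≤ Module.finrank k (LinearMap.range ψ) + Module.finrank k (LinearMap.ker ψ) := by
        gcongr
        exact Submodule.finrank_mono hker
    _ = n.multichoose d := by
        rw [LinearMap.finrank_range_add_finrank_ker, finrank_homogeneousSubmodule, Nat.card_fin]

end HilbertFunction

section Koszul

lemma map_mulRight_homogeneousSubmodule {R σ : Type*} [CommSemiring R] {f : MvPolynomial σ R}
    {a : ℕ} (hf : f.IsHomogeneous a) (d : ℕ) :
    (homogeneousSubmodule σ R d).map (LinearMap.mulRight R f) =
      homogeneousSubmodule σ R (d + a) ⊓ (Ideal.span {f}).restrictScalars R := by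
  ext x
  constructor
  · rintro ⟨c, hc, rfl⟩
    exact ⟨IsHomogeneous.mul hc hf, Ideal.mul_mem_left _ c (Ideal.mem_span_singleton_self f)⟩
  · rintro ⟨hx, hfx⟩
    obtain ⟨c, rfl⟩ := Ideal.mem_span_singleton.mp hfx
    refine ⟨DirectSum.decompose (homogeneousSubmodule σ R) c d, SetLike.coe_mem _, ?_⟩
    have := DirectSum.coe_decompose_mul_of_left_mem_of_le (homogeneousSubmodule σ R) (b := c)
      (mem_homogeneousSubmodule a f |>.mpr hf) (Nat.le_add_left a d)
    rw [DirectSum.decompose_of_mem_same _ hx, Nat.add_sub_cancel] at this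
    rw [LinearMap.mulRight_apply, mul_comm, this]

lemma span_inf_span_of_isRelPrime {B : Type*} [CommRing B] [IsDomain B]
    [UniqueFactorizationMonoid B] {f g : B} (hfg : IsRelPrime f g) :
    Ideal.span {f} ⊓ Ideal.span {g} = Ideal.span {f * g} := by
  ext x
  simp only [Ideal.mem_inf, Ideal.mem_span_singleton]
  exact ⟨fun h ↦ hfg.mul_dvd h.1 h.2, fun h ↦ ⟨dvd_of_mul_right_dvd h, dvd_of_mul_left_dvd h⟩⟩

lemma finrank_map_mulRight_homogeneousSubmodule {k σ : Type*} [Field k] [Finite σ]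
    {f : MvPolynomial σ k} (hf : f ≠ 0) (d : ℕ) :
    Module.finrank k ((homogeneousSubmodule σ k d).map (LinearMap.mulRight k f)) =
      (Nat.card σ).multichoose d := by
  rw [← finrank_homogeneousSubmodule (R := k) d]
  exact (Submodule.equivMapOfInjective _ (mul_left_injective₀ hf) _).finrank_eq.symm

variable {k : Type u} [Field k] {n a b : ℕ}

lemma hilbertFunction_add_multichoose_add_multichoose_le {J : Ideal (MvPolynomial (Fin n) k)}
    {f g : MvPolynomial (Fin n) k} (hfJ : f ∈ J) (hgJ : g ∈ J) (hf : f.IsHomogeneous a)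
    (hg : g.IsHomogeneous b) (hf0 : f ≠ 0) (hg0 : g ≠ 0) (hfg : IsRelPrime f g) (e : ℕ) :
    hilbertFunction k J (e + a + b) + (n.multichoose (e + b) + n.multichoose (e + a)) ≤
      n.multichoose (e + a + b) + n.multichoose e := by
  let S := homogeneousSubmodule (Fin n) k
  let F := (S (e + b)).map (LinearMap.mulRight k f)
  let G := (S (e + a)).map (LinearMap.mulRight k g)
  have hF : F = S (e + a + b) ⊓ (Ideal.span {f}).restrictScalars k := by
    rw [add_right_comm]
    exact map_mulRight_homogeneousSubmodule hf (e + b)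
  have hG : G = S (e + a + b) ⊓ (Ideal.span {g}).restrictScalars k :=
    map_mulRight_homogeneousSubmodule hg (e + a)
  have hFG : F ⊓ G = (S e).map (LinearMap.mulRight k (f * g)) := by
    rw [hF, hG, ← inf_inf_distrib_left, map_mulRight_homogeneousSubmodule (hf.mul hg), ← add_assoc,
      ← span_inf_span_of_isRelPrime hfg]
    rfl
  have hle (h : MvPolynomial (Fin n) k) (hJ : h ∈ J) :
      (Ideal.span {h}).restrictScalars k ≤ J.restrictScalars k :=
    (Ideal.span_singleton_le_iff_mem J).mpr hJ
  have hsup : hilbertFunction k J (e + a + b) + Module.finrank k ↥(F ⊔ G) ≤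
      n.multichoose (e + a + b) := by
    refine hilbertFunction_add_finrank_le ?_ ?_
    · rw [hF, hG]
      exact sup_le inf_le_left inf_le_left
    · rw [hF, hG]
      exact sup_le (inf_le_right.trans (hle f hfJ)) (inf_le_right.trans (hle g hgJ))
  have hdim := Submodule.finrank_sup_add_finrank_inf_eq F G
  rw [hFG, finrank_map_mulRight_homogeneousSubmodule (mul_ne_zero hf0 hg0),
    finrank_map_mulRight_homogeneousSubmodule hf0, finrank_map_mulRight_homogeneousSubmodule hg0,
    Nat.card_fin] at hdim
  omega

lemma hilbertFunction_le_mul_multichoose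
    {J : Ideal (MvPolynomial (Fin (n + 2)) k)} {f g : MvPolynomial (Fin (n + 2)) k}
    (hfJ : f ∈ J) (hgJ : g ∈ J) (hf : f.IsHomogeneous a) (hg : g.IsHomogeneous b) (hf0 : f ≠ 0)
    (hg0 : g ≠ 0) (hfg : IsRelPrime f g) {d : ℕ} (hd : a + b ≤ d) :
    hilbertFunction k J d ≤ a * b * n.multichoose d := by
  obtain ⟨e, rfl⟩ := Nat.exists_eq_add_of_le hd
  have hkoszul := hilbertFunction_add_multichoose_add_multichoose_le hfJ hgJ hf hg hf0 hg0 hfg e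
  have hcount := multichoose_add_two_add_add_le n e a b
  rw [add_comm (a + b), ← add_assoc]
  omega

end Koszul

section Elimination

section CommRing

variable {R : Type*} [CommRing R] {n : ℕ} (j : Fin (n + 1)) (v : MvPolynomial (Fin n) R)

/-- Elimination of the variable `X j`: the substitution of `v` for `X j`, the remaining variables
being renumbered in order. It realises the quotient by `X j - v`, see `ker_eliminate`. -/
noncomputable def eliminate : MvPolynomial (Fin (n + 1)) R →ₐ[R] MvPolynomial (Fin n) R :=
  aeval (j.insertNth v X : Fin (n + 1) → MvPolynomial (Fin n) R)

@[simp]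
lemma eliminate_X_self : eliminate j v (X j) = v := by simp [eliminate]

@[simp]
lemma eliminate_X_succAbove (i : Fin n) : eliminate j v (X (j.succAbove i)) = X i := by
  simp [eliminate]

@[simp]
lemma eliminate_rename (f : MvPolynomial (Fin n) R) :
    eliminate j v (rename j.succAbove f) = f := by
  have hcomp : (eliminate j v).comp (rename j.succAbove) = AlgHom.id R _ := by
    ext i : 1
    simp
  exact DFunLike.congr_fun hcomp f

lemma eliminate_surjective : Function.Surjective (eliminate j v) :=
  fun f ↦ ⟨rename j.succAbove f, eliminate_rename j v f⟩

lemma sub_rename_eliminate_mem (f : MvPolynomial (Fin (n + 1)) R) :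
    f - rename j.succAbove (eliminate j v f) ∈ Ideal.span {X j - rename j.succAbove v} := by
  rw [← Ideal.Quotient.eq]
  suffices hcomp : Ideal.Quotient.mkₐ R (Ideal.span {X j - rename j.succAbove v}) =
      (Ideal.Quotient.mkₐ R _).comp ((rename j.succAbove).comp (eliminate j v)) from
    DFunLike.congr_fun hcomp f
  ext i : 1
  induction i using j.succAboveCases with
  | x => simpa using Ideal.Quotient.eq.mpr (Ideal.mem_span_singleton_self _)
  | p i => simp

lemma ker_eliminate :
    RingHom.ker (eliminate j v) = Ideal.span {X j - rename j.succAbove v} := by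
  refine le_antisymm (fun f hf ↦ ?_) ((Ideal.span_singleton_le_iff_mem _).mpr (by simp))
  simpa [RingHom.mem_ker.mp hf] using sub_rename_eliminate_mem j v f

variable {j v} in
lemma map_eliminate_homogeneousSubmodule (hv : v.IsHomogeneous 1) (d : ℕ) :
    (homogeneousSubmodule (Fin (n + 1)) R d).map (eliminate j v).toLinearMap =
      homogeneousSubmodule (Fin n) R d := by
  ext f
  constructor
  · rintro ⟨g, hg, rfl⟩
    rw [← one_mul d]
    refine IsHomogeneous.aeval hg _ fun i ↦ ?_
    induction i using j.succAboveCases with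
    | x => simpa using hv
    | p i => simpa using isHomogeneous_X R i
  · exact fun hf ↦
      ⟨rename j.succAbove f, IsHomogeneous.rename_isHomogeneous hf, eliminate_rename j v f⟩

end CommRing

lemma exists_eq_C_mul_X_sub_rename {k : Type*} [Field k] {n : ℕ}
    {l : MvPolynomial (Fin (n + 1)) k} (hl : l.IsHomogeneous 1) (hl0 : l ≠ 0) :
    ∃ (c : k) (j : Fin (n + 1)) (v : MvPolynomial (Fin n) k), c ≠ 0 ∧ v.IsHomogeneous 1 ∧
      l = C c * (X j - rename j.succAbove v) := by
  rw [← mem_homogeneousSubmodule, homogeneousSubmodule_one_eq_span_X,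
    Submodule.mem_span_range_iff_exists_fun] at hl
  obtain ⟨c, rfl⟩ := hl
  obtain ⟨j, hj⟩ : ∃ j, c j ≠ 0 := by
    contrapose! hl0
    simp [hl0]
  refine ⟨c j, j, -((c j)⁻¹ • ∑ i, c (j.succAbove i) • X i), hj, ?_, ?_⟩
  · rw [← mem_homogeneousSubmodule]
    exact neg_mem (Submodule.smul_mem _ _
      (sum_mem fun i _ ↦ Submodule.smul_mem _ _ (isHomogeneous_X k i)))
  · rw [Fin.sum_univ_succAbove _ j, ← smul_eq_C_mul]
    simp [smul_smul, mul_inv_cancel₀ hj]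

lemma exists_surjective_ker_eq_span_singleton {k : Type*} [Field k] {n : ℕ}
    {l : MvPolynomial (Fin (n + 1)) k} (hl : l.IsHomogeneous 1) (hl0 : l ≠ 0) :
    ∃ φ : MvPolynomial (Fin (n + 1)) k →ₐ[k] MvPolynomial (Fin n) k,
      Function.Surjective φ ∧ RingHom.ker φ = Ideal.span {l} ∧
      ∀ d, (homogeneousSubmodule (Fin (n + 1)) k d).map φ.toLinearMap =
        homogeneousSubmodule (Fin n) k d := by
  obtain ⟨c, j, v, hc, hv, rfl⟩ := exists_eq_C_mul_X_sub_rename hl hl0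
  refine ⟨eliminate j v, eliminate_surjective j v, ?_, map_eliminate_homogeneousSubmodule hv⟩
  rw [ker_eliminate, Ideal.span_singleton_mul_left_unit ((IsUnit.mk0 c hc).map C)]

end Elimination

section Multiplicity

open Polynomial in
lemma hilbertSamuelMultiplicity_le {k : Type u} [Field k] {N n c : ℕ}
    {J : Ideal (MvPolynomial (Fin N) k)}
    (hlower : ∀ᶠ d in atTop, n.multichoose d ≤ hilbertFunction k J d)
    (hupper : ∀ᶠ d in atTop, hilbertFunction k J d ≤ c * n.multichoose d) :
    hilbertSamuelMultiplicity k J ≤ c := by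
  rw [hilbertSamuelMultiplicity]
  split_ifs with h
  · obtain ⟨Q, hQ, hQ1⟩ := exists_eval_eq_multichoose n
    generalize h.choose = P, h.choose_spec = hP
    have hQ0 : ∀ᶠ d : ℕ in atTop, 0 ≤ Q.eval (d : ℚ) := by
      filter_upwards [hQ] with d hd
      simp [hd]
    have hP0 : ∀ᶠ d : ℕ in atTop, 0 ≤ P.eval (d : ℚ) := by
      filter_upwards [hP] with d hd
      simp [← hd]
    have hQP : ∀ᶠ d : ℕ in atTop, Q.eval (d : ℚ) ≤ P.eval (d : ℚ) := by
      filter_upwards [hQ, hP, hlower] with d hQd hPd hd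
      rw [hQd, ← hPd]
      exact_mod_cast hd
    have hPQ : ∀ᶠ d : ℕ in atTop, P.eval (d : ℚ) ≤ (Polynomial.C (c : ℚ) * Q).eval (d : ℚ) := by
      filter_upwards [hQ, hP, hupper] with d hQd hPd hd
      rw [eval_C_mul, hQd, ← hPd]
      exact_mod_cast hd
    have hdeg : P.natDegree = Q.natDegree :=
      le_antisymm
        ((natDegree_le_of_eventually_eval_le hP0 hPQ).trans (natDegree_C_mul_le (c : ℚ) Q))
        (natDegree_le_of_eventually_eval_le hQ0 hQP)
    have hcoeff : P.leadingCoeff ≤ c * Q.leadingCoeff := by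
      rw [leadingCoeff, leadingCoeff, ← Polynomial.coeff_C_mul, hdeg]
      exact coeff_le_coeff_of_eventually_eval_le hdeg.le (natDegree_C_mul_le (c : ℚ) Q) hPQ
    calc (P.natDegree.factorial : ℚ) * P.leadingCoeff
        ≤ Q.natDegree.factorial * (c * Q.leadingCoeff) := by rw [hdeg]; gcongr
      _ = c * (Q.natDegree.factorial * Q.leadingCoeff) := by ring
      _ ≤ c := mul_le_of_le_one_right (by positivity) hQ1
  · positivity

end Multiplicity

section LinearForm

lemma height_le_natCard {k σ : Type*} [Field k] [Finite σ] {I : Ideal (MvPolynomial σ k)}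
    (hI : I ≠ ⊤) : I.height ≤ Nat.card σ := by
  have hdim := Ideal.height_le_ringKrullDim_of_ne_top hI
  rw [MvPolynomial.ringKrullDim_of_isNoetherianRing, ringKrullDim_eq_zero_of_field,
    zero_add] at hdim
  exact_mod_cast hdim

lemma exists_isRelPrime_mem_map_span {k σ τ : Type*} [Field k] [Finite σ] {d : ℕ}
    (hd : (d : ℕ∞) ≤ ENat.card k) {φ : MvPolynomial σ k →ₐ[k] MvPolynomial τ k}
    (hφ : Function.Surjective φ) {l : MvPolynomial σ k} (hker : RingHom.ker φ = Ideal.span {l})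
    (hφd : (homogeneousSubmodule σ k d).map φ.toLinearMap ≤ homogeneousSubmodule τ k d)
    {Q : Set (MvPolynomial σ k)} (hQd : ∀ q ∈ Q, q.IsHomogeneous d)
    (hQ : 3 ≤ (Ideal.span Q).height) :
    ∃ f ∈ (Ideal.span Q).map φ, ∃ g ∈ (Ideal.span Q).map φ,
      f.IsHomogeneous d ∧ g.IsHomogeneous d ∧ f ≠ 0 ∧ IsRelPrime f g := by
  let W := (Submodule.span k Q).map φ.toLinearMap
  have hWd : W ≤ homogeneousSubmodule τ k d :=
    (Submodule.map_mono (Submodule.span_le.mpr fun q hq ↦ hQd q hq)).trans hφd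
  have hWQ : ∀ w ∈ W, w ∈ (Ideal.span Q).map φ := by
    rintro _ ⟨q, hq, rfl⟩
    exact Ideal.mem_map_of_mem φ (Submodule.span_le_restrictScalars k _ Q hq)
  obtain ⟨f, hf, g, hg, hf0, hfg⟩ := exists_isRelPrime_of_card_factors_le W
    (fun π hπ hWπ ↦ by
      have hle : Ideal.span Q ≤ (Ideal.span {π}).comap φ :=
        Ideal.span_le.mpr fun q hq ↦ hWπ ⟨q, Submodule.subset_span hq, rfl⟩
      have hcontra : (3 : ℕ∞) ≤ 2 := (hQ.trans (Ideal.height_mono hle)).trans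
        (height_comap_span_singleton_le_two (φ := φ.toRingHom) hφ hker hπ.ne_top)
      norm_num at hcontra)
    (fun f hf hf0 ↦ (Nat.cast_le.mpr ((card_factors_le_totalDegree hf0).trans
      (IsHomogeneous.totalDegree (hWd hf) hf0).le)).trans hd)
  exact ⟨f, hWQ f hf, g, hWQ g hg, hWd hf, hWd hg, hf0, hfg⟩

theorem hilbertSamuelMultiplicity_le_sq_of_linearForm_mem {k : Type u} [Field k] {N d : ℕ}
    (hd : (d : ℕ∞) ≤ ENat.card k) {p : Ideal (MvPolynomial (Fin N) k)} [p.IsPrime]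
    (hp : p.height ≤ 3) {Q : Set (MvPolynomial (Fin N) k)} (hQd : ∀ q ∈ Q, q.IsHomogeneous d)
    (hQp : Ideal.span Q ≤ p) (hQ : 3 ≤ (Ideal.span Q).height) {l : MvPolynomial (Fin N) k}
    (hl : l.IsHomogeneous 1) (hlp : l ∈ p) (hl0 : l ≠ 0) :
    hilbertSamuelMultiplicity k p ≤ (d ^ 2 : ℕ) := by
  have hN : 3 ≤ N := by
    have hle := (hQ.trans (Ideal.height_mono hQp)).trans (height_le_natCard Ideal.IsPrime.ne_top')
    rw [Nat.card_fin] at hle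
    exact_mod_cast hle
  obtain ⟨n, rfl⟩ := Nat.exists_eq_add_of_le' hN
  obtain ⟨φ, hφ, hker, hφd⟩ := exists_surjective_ker_eq_span_singleton hl hl0
  have hker_le : RingHom.ker φ ≤ p := by rwa [hker, Ideal.span_singleton_le_iff_mem]
  have hcomap : (p.map φ).comap φ = p := by
    rw [Ideal.comap_map_of_surjective φ hφ, ← RingHom.ker_eq_comap_bot, sup_eq_left.mpr hker_le]
  have hprime : (p.map φ).IsPrime := Ideal.map_isPrime_of_surjective hφ hker_le
  obtain ⟨f, hf, g, hg, hfd, hgd, hf0, hfg⟩ :=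
    exists_isRelPrime_mem_map_span hd hφ hker (hφd d).le hQd hQ
  have hg0 : g ≠ 0 := by
    rintro rfl
    exact hprime.ne_top (Ideal.eq_top_of_isUnit_mem _ (Ideal.map_mono hQp hf)
      (isRelPrime_zero_right.mp hfg))
  refine hilbertSamuelMultiplicity_le (Eventually.of_forall (multichoose_le_hilbertFunction hp)) ?_
  filter_upwards [eventually_ge_atTop (d + d)] with e he
  rw [← hcomap, hilbertFunction_comap (hφd e), sq]
  exact hilbertFunction_le_mul_multichoose (Ideal.map_mono hQp hf) (Ideal.map_mono hQp hg)
    hfd hgd hf0 hg0 hfg he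

end LinearForm

theorem nondegenerate_of_height_three_mult_five_general {k : Type u} [Field k] {N d : ℕ}
    (hd : (d : ℕ∞) ≤ ENat.card k) {p : Ideal (MvPolynomial (Fin N) k)} (hp : p.IsPrime)
    (hht : p.heightENat = 3) (hmult : (d ^ 2 : ℕ) < hilbertSamuelMultiplicity k p)
    (hcontains : ∃ Q : Set (MvPolynomial (Fin N) k),
      (∀ q ∈ Q, q.IsHomogeneous d) ∧ Ideal.span Q ≤ p ∧ (Ideal.span Q).heightENat = 3) :
    ∀ l : MvPolynomial (Fin N) k, l.IsHomogeneous 1 → l ∈ p → l = 0 := by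
  intro l hl hlp
  obtain ⟨Q, hQd, hQp, hQ⟩ := hcontains
  rw [heightENat_eq_height] at hht hQ
  by_contra hl0
  exact hmult.not_ge
    (hilbertSamuelMultiplicity_le_sq_of_linearForm_mem hd hht.le hQd hQp hQ.ge hl hlp hl0)

/-- Let `p` be a graded prime ideal of height `3` with `e(S/p) = 5` over
an algebraically closed field. If `p` contains a homogeneous ideal of height `3` generated
by quadrics, then `p` is nondegenerate: it contains no nonzero linear form. -/
theorem nondegenerate_of_height_three_mult_five (k : Type u) [Field k] [IsAlgClosed k]
    (N : ℕ) (p : Ideal (MvPolynomial (Fin N) k)) (hp : p.IsPrime)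
    (hhom : p.IsHomogeneous (MvPolynomial.homogeneousSubmodule (Fin N) k))
    (hht : p.heightENat = 3)
    (hmult : hilbertSamuelMultiplicity k p = 5)
    (hcontains : ∃ Q : Set (MvPolynomial (Fin N) k),
      (∀ q ∈ Q, MvPolynomial.IsHomogeneous q 2) ∧ Ideal.span Q ≤ p ∧
        (Ideal.span Q).heightENat = 3) :
    ∀ l : MvPolynomial (Fin N) k, l.IsHomogeneous 1 → l ∈ p → l = 0 := by
  exact nondegenerate_of_height_three_mult_five_general (d := 2)
    (Order.add_one_le_of_lt ENat.one_lt_card) hp hht (by norm_num [hmult]) hcontains
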